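/- Let p be a prime, n ≥ 0, let R = ℤ[X₁,…,Xₙ] be the polynomial ring over ℤ in n variables, and let I ⊆ R be the ideal generated by p and by X₁,…,Xₙ. Then for every a ∈ R and every m ≥ 0: if p·a ∈ I^{m+1}, then a ∈ I^{m}. -/

import Mathlib

open MvPolynomial

/-!
Give an element of the base ring `R` order `k` if it lies in `J ^ k`, and each variable order `1`.
The powers of `(J, X)` are then described coefficientwise: `f ∈ (J, X) ^ m` if and only if the
coefficient of every monomial of degree `d` lies in `J ^ (m - d)`. For `J = (r)` this says
`r ^ (m - d) ∣ coeff`, and a factor `r` can be cancelled in every coefficient of `r * a`.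
-/

section

variable {σ R : Type*} [CommSemiring R]

theorem coeff_mul_mem_pow_sub_degree {J : Ideal R} {k l : ℕ} {f g : MvPolynomial σ R}
    (hf : ∀ d, coeff d f ∈ J ^ (k - d.degree)) (hg : ∀ d, coeff d g ∈ J ^ (l - d.degree))
    (d : σ →₀ ℕ) : coeff d (f * g) ∈ J ^ (k + l - d.degree) := by
  classical
  rw [coeff_mul]
  refine Ideal.sum_mem _ fun ⟨d₁, d₂⟩ hd => ?_
  have hdegree : d₁.degree + d₂.degree = d.degree := by
    rw [← map_add, Finset.HasAntidiagonal.mem_antidiagonal.mp hd]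
  have hmul := Ideal.mul_mem_mul (hf d₁) (hg d₂)
  rw [← pow_add] at hmul
  exact Ideal.pow_le_pow_right (by lia) hmul

theorem map_C_sup_idealOfVars_le_comap_constantCoeff (J : Ideal R) :
    J.map C ⊔ idealOfVars σ R ≤ J.comap constantCoeff := by
  refine sup_le (Ideal.map_le_iff_le_comap.mpr fun r hr => ?_) (Ideal.span_le.mpr ?_)
  · simpa using hr
  · rintro _ ⟨i, rfl⟩
    simp

theorem coeff_mem_pow_one_sub_degree {J : Ideal R} {f : MvPolynomial σ R}
    (hf : f ∈ J.map C ⊔ idealOfVars σ R) (d : σ →₀ ℕ) : coeff d f ∈ J ^ (1 - d.degree) := by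
  obtain rfl | hd := eq_or_ne d 0
  · simpa [constantCoeff_eq] using map_C_sup_idealOfVars_le_comap_constantCoeff J hf
  · have hdegree : d.degree ≠ 0 := mt (Finsupp.degree_eq_zero_iff d).mp hd
    simp [show 1 - d.degree = 0 by lia]

theorem coeff_mem_pow_sub_degree {J : Ideal R} {m : ℕ} {f : MvPolynomial σ R}
    (hf : f ∈ (J.map C ⊔ idealOfVars σ R) ^ m) (d : σ →₀ ℕ) :
    coeff d f ∈ J ^ (m - d.degree) := by
  induction m generalizing f d with
  | zero => simp
  | succ m ih =>
    rw [pow_succ] at hf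
    induction hf using Submodule.mul_induction_on' with
    | mem_mul_mem g hg h hh =>
      exact coeff_mul_mem_pow_sub_degree (ih hg) (coeff_mem_pow_one_sub_degree hh) d
    | add g _ h _ hg hh => exact coeff_add d g h ▸ add_mem hg hh

theorem monomial_mem_map_C_sup_idealOfVars_pow {J : Ideal R} {m : ℕ} {d : σ →₀ ℕ} {c : R}
    (hc : c ∈ J ^ (m - d.degree)) : monomial d c ∈ (J.map C ⊔ idealOfVars σ R) ^ m := by
  have hC : C c ∈ (J.map C ⊔ idealOfVars σ R) ^ (m - d.degree) := by
    refine Ideal.pow_right_mono le_sup_left _ ?_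
    exact Ideal.map_pow C J _ ▸ Ideal.mem_map_of_mem C hc
  have hX : monomial d 1 ∈ (J.map C ⊔ idealOfVars σ R) ^ d.degree := by
    refine Ideal.pow_right_mono le_sup_right _ ?_
    rw [pow_idealOfVars_eq_span]
    exact Ideal.subset_span ⟨d, rfl, rfl⟩
  have hmul := Ideal.mul_mem_mul hC hX
  rw [← pow_add, C_mul_monomial, mul_one] at hmul
  exact Ideal.pow_le_pow_right (by lia) hmul

theorem mem_map_C_sup_idealOfVars_pow_iff {J : Ideal R} {m : ℕ} {f : MvPolynomial σ R} :
    f ∈ (J.map C ⊔ idealOfVars σ R) ^ m ↔ ∀ d, coeff d f ∈ J ^ (m - d.degree) := by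
  refine ⟨coeff_mem_pow_sub_degree, fun h => ?_⟩
  rw [f.as_sum]
  exact Ideal.sum_mem _ fun d _ => monomial_mem_map_C_sup_idealOfVars_pow (h d)

theorem mem_span_C_union_range_X_pow_iff {r : R} {m : ℕ} {f : MvPolynomial σ R} :
    f ∈ Ideal.span ({C r} ∪ Set.range X) ^ m ↔ ∀ d, r ^ (m - d.degree) ∣ coeff d f := by
  have hspan : Ideal.span ({C r} ∪ Set.range X) = (Ideal.span {r}).map C ⊔ idealOfVars σ R := by
    rw [Ideal.span_union, Ideal.map_span, Set.image_singleton]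
  simp only [hspan, mem_map_C_sup_idealOfVars_pow_iff, Ideal.span_singleton_pow,
    Ideal.mem_span_singleton]

theorem stmt_3_general {r : R} (hr : IsLeftRegular r) (a : MvPolynomial σ R) (m : ℕ)
    (h : C r * a ∈ Ideal.span ({C r} ∪ Set.range X) ^ (m + 1)) :
    a ∈ Ideal.span ({C r} ∪ Set.range X) ^ m := by
  rw [mem_span_C_union_range_X_pow_iff] at h ⊢
  intro d
  have hdvd : r ^ (m + 1 - d.degree) ∣ r * coeff d a := coeff_C_mul d r a ▸ h d
  obtain hd | hd := le_or_gt d.degree m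
  · rw [Nat.succ_sub hd, pow_succ'] at hdvd
    exact hr.dvd_cancel_left.mp hdvd
  · simp [Nat.sub_eq_zero_of_le hd.le]

end

/-- Let `p` be a prime, `R = ℤ[X₁,…,Xₙ]`, and `I = (p, X₁, …, Xₙ)`.
Then for every `a ∈ R` and `m ≥ 0`: if `p·a ∈ I^{m+1}` then `a ∈ I^{m}`. -/
theorem stmt_3 (p : ℕ) (hp : p.Prime) (n : ℕ) :
    ∀ (a : MvPolynomial (Fin n) ℤ) (m : ℕ),
      (p : MvPolynomial (Fin n) ℤ) * a ∈
          (Ideal.span ({(p : MvPolynomial (Fin n) ℤ)} ∪ Set.range X)) ^ (m + 1) →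
      a ∈ (Ideal.span ({(p : MvPolynomial (Fin n) ℤ)} ∪ Set.range X)) ^ m := by
  have hreg : IsLeftRegular (p : ℤ) := (IsRegular.of_ne_zero (Nat.cast_ne_zero.mpr hp.ne_zero)).left
  simpa only [map_natCast] using stmt_3_general (σ := Fin n) hreg
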